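/- Let k be a field, q ∈ k and n ≥ 1 an integer such that (m)_q ≠ 0 for all 1 ≤ m ≤ n. Let A be a unital associative k-algebra and x, y, h ∈ A with x·y = q·y·x + h, x·h = q²·h·x and h·y = q²·y·h. Then (x+y)^n = Σ_{r+2s+t=n} ((n)_q! / ((r)_q!·(2)_q^s·(s)_{q²}!·(t)_q!)) · y^r·h^s·x^t, the sum being over all (r, s, t) ∈ ℕ³ with r + 2s + t = n (under the hypothesis on q all the denominators are nonzero elements of k). -/

import Mathlib

/-- The q-integer `(m)_q = 1 + q + ⋯ + q^{m−1}`. -/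
def qInt {k : Type*} [CommRing k] (q : k) (m : ℕ) : k := ∑ i ∈ Finset.range m, q ^ i

/-- The q-factorial `(m)_q! = (1)_q (2)_q ⋯ (m)_q`. -/
def qFact {k : Type*} [CommRing k] (q : k) : ℕ → k
  | 0 => 1
  | m + 1 => qFact q m * qInt q (m + 1)

theorem qInt_zero' {k : Type*} [CommRing k] (q : k) : qInt q 0 = 0 := by simp [qInt]

theorem qInt_one' {k : Type*} [CommRing k] (q : k) : qInt q 1 = 1 := by simp [qInt]

theorem qInt_add' {k : Type*} [CommRing k] (q : k) (a b : ℕ) :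
    qInt q (a + b) = qInt q a + q ^ a * qInt q b := by
  simp [qInt, Finset.sum_range_add, Finset.mul_sum, pow_add]

theorem qInt_two_mul' {k : Type*} [CommRing k] (q : k) (s : ℕ) :
    qInt q (2 * s) = qInt q 2 * qInt (q ^ 2) s := by
  induction s with
  | zero => simp [qInt]
  | succ s ih =>
    rw [mul_add, mul_one, qInt_add', ih, qInt_add' (q ^ 2) s 1, qInt_one']
    ring

def trip (n : ℕ) : Finset (ℕ × ℕ × ℕ) :=
  (Finset.range (n + 1) ×ˢ Finset.range (n + 1) ×ˢ Finset.range (n + 1)).filter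
    (fun p => p.1 + 2 * p.2.1 + p.2.2 = n)

theorem mem_trip (n : ℕ) (p : ℕ × ℕ × ℕ) :
    p ∈ trip n ↔ p.1 + 2 * p.2.1 + p.2.2 = n := by
  simp only [trip, Finset.mem_filter, Finset.mem_product, Finset.mem_range]
  omega

def trip' (n : ℕ) : Finset (ℕ × ℕ × ℕ) :=
  (Finset.range (n + 1) ×ˢ Finset.range (n + 1) ×ˢ Finset.range (n + 1)).filter
    (fun p => p.1 + 2 * p.2.1 + p.2.2 + 1 = n)

theorem mem_trip' (n : ℕ) (p : ℕ × ℕ × ℕ) :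
    p ∈ trip' n ↔ p.1 + 2 * p.2.1 + p.2.2 + 1 = n := by
  simp only [trip', Finset.mem_filter, Finset.mem_product, Finset.mem_range]
  omega

theorem shift_r {A : Type*} [AddCommMonoid A] (n : ℕ) (f : ℕ × ℕ × ℕ → A)
    (hf : ∀ s t, f (0, s, t) = 0) :
    ∑ p ∈ trip n, f (p.1 + 1, p.2.1, p.2.2) = ∑ p ∈ trip (n + 1), f p := by
  refine Finset.sum_of_injOn (fun p => (p.1 + 1, p.2.1, p.2.2)) ?_ ?_ ?_ ?_
  · rintro ⟨a, b, c⟩ _ ⟨a', b', c'⟩ _ h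
    simpa using h
  · rintro ⟨a, b, c⟩ h
    simp only [Finset.mem_coe, mem_trip] at h ⊢
    omega
  · rintro ⟨a, b, c⟩ h h'
    cases a with
    | zero => exact hf _ _
    | succ a =>
      exfalso; apply h'
      simp only [mem_trip] at h
      exact ⟨(a, b, c), by simp only [Finset.mem_coe, mem_trip]; omega, rfl⟩
  · intros; rfl

theorem shift_t {A : Type*} [AddCommMonoid A] (n : ℕ) (f : ℕ × ℕ × ℕ → A)
    (hf : ∀ r s, f (r, s, 0) = 0) :
    ∑ p ∈ trip n, f (p.1, p.2.1, p.2.2 + 1) = ∑ p ∈ trip (n + 1), f p := by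
  refine Finset.sum_of_injOn (fun p => (p.1, p.2.1, p.2.2 + 1)) ?_ ?_ ?_ ?_
  · rintro ⟨a, b, c⟩ _ ⟨a', b', c'⟩ _ h
    simpa using h
  · rintro ⟨a, b, c⟩ h
    simp only [Finset.mem_coe, mem_trip] at h ⊢
    omega
  · rintro ⟨a, b, c⟩ h h'
    cases c with
    | zero => exact hf _ _
    | succ c =>
      exfalso; apply h'
      simp only [mem_trip] at h
      exact ⟨(a, b, c), by simp only [Finset.mem_coe, mem_trip]; omega, rfl⟩
  · intros; rfl

theorem shift_s {A : Type*} [AddCommMonoid A] (n : ℕ) (f : ℕ × ℕ × ℕ → A)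
    (hf : ∀ r t, f (r, 0, t) = 0) :
    ∑ p ∈ trip' n, f (p.1, p.2.1 + 1, p.2.2) = ∑ p ∈ trip (n + 1), f p := by
  refine Finset.sum_of_injOn (fun p => (p.1, p.2.1 + 1, p.2.2)) ?_ ?_ ?_ ?_
  · rintro ⟨a, b, c⟩ _ ⟨a', b', c'⟩ _ h
    simpa using h
  · rintro ⟨a, b, c⟩ h
    simp only [Finset.mem_coe, mem_trip, mem_trip'] at h ⊢
    omega
  · rintro ⟨a, b, c⟩ h h'
    cases b with
    | zero => exact hf _ _
    | succ b =>
      exfalso; apply h'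
      simp only [mem_trip] at h
      exact ⟨(a, b, c), by simp only [Finset.mem_coe, mem_trip']; omega, rfl⟩
  · intros; rfl

theorem shift_r' {A : Type*} [AddCommMonoid A] (n : ℕ) (f : ℕ × ℕ × ℕ → A)
    (hf : ∀ s t, f (0, s, t) = 0) :
    ∑ p ∈ trip' n, f (p.1 + 1, p.2.1, p.2.2) = ∑ p ∈ trip n, f p := by
  refine Finset.sum_of_injOn (fun p => (p.1 + 1, p.2.1, p.2.2)) ?_ ?_ ?_ ?_
  · rintro ⟨a, b, c⟩ _ ⟨a', b', c'⟩ _ h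
    simpa using h
  · rintro ⟨a, b, c⟩ h
    simp only [Finset.mem_coe, mem_trip, mem_trip'] at h ⊢
    omega
  · rintro ⟨a, b, c⟩ h h'
    cases a with
    | zero => exact hf _ _
    | succ a =>
      exfalso; apply h'
      simp only [mem_trip] at h
      exact ⟨(a, b, c), by simp only [Finset.mem_coe, mem_trip']; omega, rfl⟩
  · intros; rfl

theorem x_mul_ypow {k A : Type*} [Field k] [Ring A] [Algebra k A] (q : k) (x y h : A)
    (hxy : x * y = q • (y * x) + h)
    (hhy : h * y = q ^ 2 • (y * h)) (r : ℕ) :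
    x * y ^ (r + 1) = q ^ (r + 1) • (y ^ (r + 1) * x) + (q ^ r * qInt q (r + 1)) • (y ^ r * h) := by
  induction r with
  | zero => simp [hxy, qInt_one']
  | succ r ih =>
    rw [pow_succ y (r + 1), ← mul_assoc, ih, add_mul, smul_mul_assoc, smul_mul_assoc,
      mul_assoc _ x y, hxy, mul_assoc _ h y, hhy, add_comm (r + 1) 1, qInt_add' q 1 (r + 1),
      qInt_one']
    simp only [mul_add, mul_smul_comm, smul_add, smul_smul, ← mul_assoc, ← pow_succ]
    module

theorem x_mul_hpow {k A : Type*} [Field k] [Ring A] [Algebra k A] (q : k) (x h : A)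
    (hxh : x * h = q ^ 2 • (h * x)) (s : ℕ) :
    x * h ^ s = q ^ (2 * s) • (h ^ s * x) := by
  induction s with
  | zero => simp
  | succ s ih =>
    rw [pow_succ h, ← mul_assoc, ih, smul_mul_assoc, mul_assoc _ x h, hxh, mul_smul_comm,
      smul_smul, ← mul_assoc]
    congr 1
    ring

theorem x_mul_mono {k A : Type*} [Field k] [Ring A] [Algebra k A] (q : k) (x y h : A)
    (hxy : x * y = q • (y * x) + h)
    (hxh : x * h = q ^ 2 • (h * x))
    (hhy : h * y = q ^ 2 • (y * h)) (r s t : ℕ) :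
    x * (y ^ r * h ^ s * x ^ t) = q ^ (r + 2 * s) • (y ^ r * h ^ s * x ^ (t + 1)) +
      (q ^ (r - 1) * qInt q r) • (y ^ (r - 1) * h ^ (s + 1) * x ^ t) := by
  have e : ∀ r, (y ^ r * x) * h ^ s * x ^ t = q ^ (2 * s) • (y ^ r * h ^ s * x ^ (t + 1)) := by
    intro r
    rw [mul_assoc (y ^ r) x, x_mul_hpow q x h hxh, mul_smul_comm, smul_mul_assoc, pow_succ' x]
    simp only [mul_assoc]
  cases r with
  | zero =>
    have := e 0
    simp only [pow_zero, one_mul] at this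
    simp [qInt_zero', ← mul_assoc, this]
  | succ r =>
    rw [← mul_assoc, ← mul_assoc, x_mul_ypow q x y h hxy hhy, add_mul, add_mul, smul_mul_assoc,
      smul_mul_assoc, e, smul_smul, ← pow_add, smul_mul_assoc, smul_mul_assoc, mul_assoc (y ^ r) h,
      ← pow_succ', Nat.add_sub_cancel]

def dco {k : Type*} [Field k] (q : k) (r s t : ℕ) : k :=
  (qFact q r * qInt q 2 ^ s * qFact (q ^ 2) s * qFact q t)⁻¹

theorem dco_r {k : Type*} [Field k] (q : k) (r s t : ℕ) (h : qInt q (r + 1) ≠ 0) :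
    qInt q (r + 1) * dco q (r + 1) s t = dco q r s t := by
  simp only [dco, qFact, mul_inv]
  field_simp

theorem dco_t {k : Type*} [Field k] (q : k) (r s t : ℕ) (h : qInt q (t + 1) ≠ 0) :
    qInt q (t + 1) * dco q r s (t + 1) = dco q r s t := by
  simp only [dco, qFact, mul_inv]
  field_simp

theorem dco_s {k : Type*} [Field k] (q : k) (r s t : ℕ) (h : qInt q (2 * (s + 1)) ≠ 0) :
    qInt q (2 * (s + 1)) * dco q r (s + 1) t = dco q r s t := by
  rw [qInt_two_mul'] at h ⊢
  have h1 := left_ne_zero_of_mul h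
  have h2 := right_ne_zero_of_mul h
  simp only [dco, qFact, mul_inv, pow_succ]
  field_simp

theorem main_step {k A : Type*} [Field k] [Ring A] [Algebra k A]
    (q : k) (n : ℕ)
    (hq : ∀ m : ℕ, 1 ≤ m → m ≤ n + 1 → qInt q m ≠ 0)
    (x y h : A)
    (hxy : x * y = q • (y * x) + h)
    (hxh : x * h = q ^ 2 • (h * x))
    (hhy : h * y = q ^ 2 • (y * h)) :
    (x + y) * ∑ p ∈ trip n, dco q p.1 p.2.1 p.2.2 • (y ^ p.1 * h ^ p.2.1 * x ^ p.2.2) =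
    qInt q (n + 1) •
      ∑ p ∈ trip (n + 1), dco q p.1 p.2.1 p.2.2 • (y ^ p.1 * h ^ p.2.1 * x ^ p.2.2) := by
  have hR : qInt q (n + 1) •
      ∑ p ∈ trip (n + 1), dco q p.1 p.2.1 p.2.2 • (y ^ p.1 * h ^ p.2.1 * x ^ p.2.2) =
      ∑ p ∈ trip (n + 1), (qInt q p.1 * dco q p.1 p.2.1 p.2.2) •
          (y ^ p.1 * h ^ p.2.1 * x ^ p.2.2) +
      ∑ p ∈ trip (n + 1), (q ^ p.1 * (qInt q (2 * p.2.1) * dco q p.1 p.2.1 p.2.2)) •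
          (y ^ p.1 * h ^ p.2.1 * x ^ p.2.2) +
      ∑ p ∈ trip (n + 1), (q ^ (p.1 + 2 * p.2.1) * (qInt q p.2.2 * dco q p.1 p.2.1 p.2.2)) •
          (y ^ p.1 * h ^ p.2.1 * x ^ p.2.2) := by
    rw [Finset.smul_sum, ← Finset.sum_add_distrib, ← Finset.sum_add_distrib]
    refine Finset.sum_congr rfl fun p hp => ?_
    rw [mem_trip] at hp
    rw [← hp, qInt_add', qInt_add']
    module
  have hL : (x + y) * ∑ p ∈ trip n, dco q p.1 p.2.1 p.2.2 • (y ^ p.1 * h ^ p.2.1 * x ^ p.2.2) =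
      ∑ p ∈ trip n, dco q p.1 p.2.1 p.2.2 • (y ^ (p.1 + 1) * h ^ p.2.1 * x ^ p.2.2) +
      ∑ p ∈ trip n, (q ^ (p.1 - 1) * (qInt q p.1 * dco q p.1 p.2.1 p.2.2)) •
        (y ^ (p.1 - 1) * h ^ (p.2.1 + 1) * x ^ p.2.2) +
      ∑ p ∈ trip n, (q ^ (p.1 + 2 * p.2.1) * dco q p.1 p.2.1 p.2.2) •
        (y ^ p.1 * h ^ p.2.1 * x ^ (p.2.2 + 1)) := by
    rw [Finset.mul_sum, ← Finset.sum_add_distrib, ← Finset.sum_add_distrib]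
    refine Finset.sum_congr rfl fun p hp => ?_
    rw [mul_smul_comm, add_mul, x_mul_mono q x y h hxy hxh hhy, pow_succ' y p.1]
    simp only [mul_assoc]
    module
  rw [hL, hR]
  congr 1
  · congr 1
    · rw [← shift_r n _ (by intro s t; simp [qInt_zero'])]
      refine Finset.sum_congr rfl fun p hp => ?_
      rw [mem_trip] at hp
      dsimp only
      rw [dco_r q _ _ _ (hq _ (by omega) (by omega))]
    · rw [← shift_s n _ (by intro s t; simp [qInt_zero']),
        ← shift_r' n _ (by intro s t; simp [qInt_zero'])]
      refine Finset.sum_congr rfl fun p hp => ?_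
      rw [mem_trip'] at hp
      dsimp only
      rw [dco_r q _ _ _ (hq _ (by omega) (by omega)), dco_s q _ _ _ (hq _ (by omega) (by omega)),
        Nat.add_sub_cancel]
  · rw [← shift_t n _ (by intro s t; simp [qInt_zero'])]
    refine Finset.sum_congr rfl fun p hp => ?_
    rw [mem_trip] at hp
    dsimp only
    rw [dco_t q _ _ _ (hq _ (by omega) (by omega))]

theorem main_sum {k A : Type*} [Field k] [Ring A] [Algebra k A]
    (q : k) (n : ℕ)
    (hq : ∀ m : ℕ, 1 ≤ m → m ≤ n → qInt q m ≠ 0)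
    (x y h : A)
    (hxy : x * y = q • (y * x) + h)
    (hxh : x * h = q ^ 2 • (h * x))
    (hhy : h * y = q ^ 2 • (y * h)) :
    (x + y) ^ n = qFact q n •
      ∑ p ∈ trip n, dco q p.1 p.2.1 p.2.2 • (y ^ p.1 * h ^ p.2.1 * x ^ p.2.2) := by
  induction n with
  | zero =>
    have : trip 0 = {(0, 0, 0)} := by decide
    simp [this, qFact, dco]
  | succ n ih =>
    rw [pow_succ', ih (fun m h1 h2 => hq m h1 (by omega)), mul_smul_comm,
      main_step q n hq x y h hxy hxh hhy, smul_smul, qFact]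

/-- Blumen's q-binomial formula: if `x·y = q·y·x + h`, `x·h = q²·h·x`,
`h·y = q²·y·h`, then `(x+y)^n = Σ_{r+2s+t=n} (n)_q!/((r)_q!(2)_q^s(s)_{q²}!(t)_q!)
y^r h^s x^t`. -/
theorem stmt_16 {k A : Type*} [Field k] [Ring A] [Algebra k A]
    (q : k) (n : ℕ) (hn : 1 ≤ n)
    (hq : ∀ m : ℕ, 1 ≤ m → m ≤ n → qInt q m ≠ 0)
    (x y h : A)
    (hxy : x * y = q • (y * x) + h)
    (hxh : x * h = q ^ 2 • (h * x))
    (hhy : h * y = q ^ 2 • (y * h)) :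
    (x + y) ^ n =
      ∑ᶠ p ∈ {p : ℕ × ℕ × ℕ | p.1 + 2 * p.2.1 + p.2.2 = n},
        (qFact q n /
            (qFact q p.1 * qInt q 2 ^ p.2.1 * qFact (q ^ 2) p.2.1 * qFact q p.2.2)) •
          (y ^ p.1 * h ^ p.2.1 * x ^ p.2.2) := by
  rw [main_sum q n hq x y h hxy hxh hhy, Finset.smul_sum]
  have : {p : ℕ × ℕ × ℕ | p.1 + 2 * p.2.1 + p.2.2 = n} = (trip n : Set (ℕ × ℕ × ℕ)) := by
    ext p
    simp [mem_trip]
  rw [this, finsum_mem_coe_finset]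
  refine Finset.sum_congr rfl fun p _ => ?_
  rw [smul_smul, dco, div_eq_mul_inv]
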